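/- Let D be a digraph with m arcs and minimum outdegree d ≥ 4, let X, Y be a partition of V(D) with e(X) = 0, set θ := min{|θ(X₁,X₂)| : X₁,X₂ a partition of X} and X' := {x ∈ X : s(x) ≥ θ}. Let ε > 0 and suppose every y ∈ Y satisfies d(y) ≤ ε²m/4. Then either there exists a bipartition V(D) = V₁ ∪ V₂ with min{e(V₁,V₂), e(V₂,V₁)} ≥ ((d−1)/(2(2d−1)) − ε)·m, or |X'| is an odd integer. -/

import Mathlib

open Finset

/-- Number of arcs of the digraph `A` directed from a vertex of `S` to a vertex of `T`. -/
def dArcs {V : Type} [Fintype V] [DecidableEq V] (A : V → V → Prop) [DecidableRel A]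
    (S T : Finset V) : ℕ :=
  ((S ×ˢ T).filter fun p => A p.1 p.2).card

/-- Outdegree of `x`. -/
def outDeg {V : Type} [Fintype V] (A : V → V → Prop) [DecidableRel A] (x : V) : ℕ :=
  (Finset.univ.filter fun y => A x y).card

/-- Indegree of `x`. -/
def inDeg {V : Type} [Fintype V] (A : V → V → Prop) [DecidableRel A] (x : V) : ℕ :=
  (Finset.univ.filter fun y => A y x).card

/-- Degree of `x`: outdegree plus indegree. -/
def deg {V : Type} [Fintype V] (A : V → V → Prop) [DecidableRel A] (x : V) : ℕ :=
  outDeg A x + inDeg A x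

/-- `s(x) = max{d⁺(x) − d⁻(x), d⁻(x) − d⁺(x)}`. -/
def sVal {V : Type} [Fintype V] (A : V → V → Prop) [DecidableRel A] (x : V) : ℤ :=
  max ((outDeg A x : ℤ) - (inDeg A x : ℤ)) ((inDeg A x : ℤ) - (outDeg A x : ℤ))

/-- The gap `θ(X₁,X₂) = (e(X₁,Y)+e(Y,X₂)) − (e(X₂,Y)+e(Y,X₁))`. -/
def gap {V : Type} [Fintype V] [DecidableEq V] (A : V → V → Prop) [DecidableRel A]
    (X₁ X₂ Y : Finset V) : ℤ :=
  ((dArcs A X₁ Y : ℤ) + (dArcs A Y X₂ : ℤ)) - ((dArcs A X₂ Y : ℤ) + (dArcs A Y X₁ : ℤ))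

/-- `t` is a difference `∑ X₁ f − ∑ (S \ X₁) f` for some `X₁ ⊆ S`. -/
def IsSignedSum {V : Type} [DecidableEq V] (f : V → ℤ) (S : Finset V) (t : ℤ) : Prop :=
  ∃ X₁ ⊆ S, t = ∑ x ∈ X₁, f x - ∑ x ∈ S \ X₁, f x

section SignedSums

variable {V : Type} [DecidableEq V] {f : V → ℤ} {S : Finset V} {t : ℤ} {x : V}

lemma IsSignedSum.insert_add (h : IsSignedSum f S t) (hx : x ∉ S) :
    IsSignedSum f (insert x S) (t + f x) := by
  obtain ⟨X₁, hX₁, rfl⟩ := h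
  refine ⟨insert x X₁, insert_subset_insert x hX₁, ?_⟩
  have hx₁ : x ∉ X₁ := fun h => hx (hX₁ h)
  rw [insert_sdiff_insert, sdiff_insert_of_notMem hx, sum_insert hx₁]
  ring

lemma IsSignedSum.insert_sub (h : IsSignedSum f S t) (hx : x ∉ S) :
    IsSignedSum f (insert x S) (t - f x) := by
  obtain ⟨X₁, hX₁, rfl⟩ := h
  refine ⟨X₁, hX₁.trans (subset_insert x S), ?_⟩
  have hx₁ : x ∉ X₁ := fun h => hx (hX₁ h)
  have hx₂ : x ∉ S \ X₁ := fun h => hx (mem_sdiff.1 h).1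
  rw [insert_sdiff_of_notMem S hx₁, sum_insert hx₂]
  ring

/-- Numbers of absolute value below `2θ`, evenly many of which have absolute value at least `θ`,
admit a signed sum of absolute value below `θ`. -/
lemma exists_isSignedSum_abs_lt {θ : ℤ} (hθ : 0 < θ) (f : V → ℤ) (S : Finset V)
    (hf : ∀ x ∈ S, |f x| < 2 * θ) (heven : Even #{x ∈ S | θ ≤ |f x|}) :
    ∃ t, IsSignedSum f S t ∧ |t| < θ := by
  induction S using Finset.strongInduction with
  | H S ih =>
  by_cases hsmall : ∃ x ∈ S, |f x| < θ
  · obtain ⟨x, hxS, hx⟩ := hsmall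
    have heven' : Even #{z ∈ S.erase x | θ ≤ |f z|} := by
      rwa [filter_erase, erase_eq_of_notMem]
      simp [hx]
    obtain ⟨t, ht, htθ⟩ := ih _ (erase_ssubset hxS)
      (fun z hz => hf z (mem_of_mem_erase hz)) heven'
    have hadd := ht.insert_add (notMem_erase x S)
    have hsub := ht.insert_sub (notMem_erase x S)
    rw [insert_erase hxS] at hadd hsub
    by_cases h : |t + f x| < θ
    · exact ⟨_, hadd, h⟩
    · exact ⟨_, hsub, by grind⟩
  · push Not at hsmall
    rw [filter_true_of_mem hsmall] at heven
    obtain rfl | ⟨x, hxS⟩ := S.eq_empty_or_nonempty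
    · exact ⟨0, ⟨∅, by simp⟩, by simpa using hθ⟩
    have hcard := card_erase_add_one hxS
    obtain ⟨y, hy⟩ : (S.erase x).Nonempty := by
      rw [← card_pos]
      obtain ⟨k, hk⟩ := heven
      omega
    have hcard' := card_erase_add_one hy
    have hsub : (S.erase x).erase y ⊆ S := (erase_subset _ _).trans (erase_subset _ _)
    have heven' : Even #{z ∈ (S.erase x).erase y | θ ≤ |f z|} := by
      rw [filter_true_of_mem fun z hz => hsmall z (hsub hz)]
      obtain ⟨k, hk⟩ := heven
      exact ⟨k - 1, by omega⟩
    obtain ⟨t, ht, htθ⟩ := ih _ ((erase_ssubset hy).trans (erase_ssubset hxS))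
      (fun z hz => hf z (hsub hz)) heven'
    have hyn := notMem_erase y (S.erase x)
    have hxn := notMem_erase x S
    have h₁ := ht.insert_add hyn
    have h₂ := ht.insert_sub hyn
    rw [insert_erase hy] at h₁ h₂
    have h₁₁ := h₁.insert_add hxn
    have h₁₂ := h₁.insert_sub hxn
    have h₂₁ := h₂.insert_add hxn
    have h₂₂ := h₂.insert_sub hxn
    rw [insert_erase hxS] at h₁₁ h₁₂ h₂₁ h₂₂
    have hx₁ := hsmall x hxS
    have hx₂ := hf x hxS
    have hy₁ := hsmall y (mem_of_mem_erase hy)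
    have hy₂ := hf y (mem_of_mem_erase hy)
    by_contra! hcon
    have := hcon _ h₁₁
    have := hcon _ h₁₂
    have := hcon _ h₂₁
    have := hcon _ h₂₂
    grind

end SignedSums

/-- Signs on `S` extend to `S ∪ Y` so that a quadratic form grows by at most its trace on `Y`. -/
lemma exists_sign_quadratic_le {V : Type} [DecidableEq V] (B : V → V → ℝ) (S Y : Finset V)
    (hSY : Disjoint S Y) (σ₀ : V → ℝ) (hσ₀ : ∀ v, σ₀ v = 1 ∨ σ₀ v = -1) :
    ∃ σ : V → ℝ, (∀ v, σ v = 1 ∨ σ v = -1) ∧ (∀ v ∈ S, σ v = σ₀ v) ∧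
      ∑ u ∈ S ∪ Y, ∑ v ∈ S ∪ Y, B u v * (σ u * σ v) ≤
        ∑ u ∈ S, ∑ v ∈ S, B u v * (σ₀ u * σ₀ v) + ∑ y ∈ Y, B y y := by
  induction Y using Finset.induction_on with
  | empty => exact ⟨σ₀, hσ₀, fun _ _ => rfl, by simp⟩
  | insert y Y hy ih =>
    rw [disjoint_insert_right] at hSY
    obtain ⟨σ, hσ, hS, hle⟩ := ih hSY.2
    have hyT : y ∉ S ∪ Y := by simp [hSY.1, hy]
    obtain ⟨c, hc, hcle⟩ : ∃ c : ℝ, (c = 1 ∨ c = -1) ∧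
        c * ∑ v ∈ S ∪ Y, (B y v + B v y) * σ v ≤ 0 := by
      rcases le_total (∑ v ∈ S ∪ Y, (B y v + B v y) * σ v) 0 with h | h
      · exact ⟨1, Or.inl rfl, by simpa using h⟩
      · exact ⟨-1, Or.inr rfl, by simpa using h⟩
    have hc2 : c * c = 1 := by rcases hc with rfl | rfl <;> norm_num
    have hne : ∀ v ∈ S ∪ Y, Function.update σ y c v = σ v := fun v hv =>
      Function.update_of_ne (ne_of_mem_of_not_mem hv hyT) _ _
    refine ⟨Function.update σ y c, fun v => ?_, fun v hv => ?_, ?_⟩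
    · by_cases h : v = y
      · subst h; simpa using hc
      · simpa [h] using hσ v
    · rw [hne v (mem_union_left _ hv), hS v hv]
    · have hcross : c * ∑ v ∈ S ∪ Y, (B y v + B v y) * σ v =
          ∑ v ∈ S ∪ Y, B y v * (c * σ v) + ∑ v ∈ S ∪ Y, B v y * (σ v * c) := by
        rw [mul_sum, ← sum_add_distrib]
        exact sum_congr rfl fun v _ => by ring
      have hexp : ∑ u ∈ S ∪ insert y Y, ∑ v ∈ S ∪ insert y Y,
          B u v * (Function.update σ y c u * Function.update σ y c v) =
          B y y * (c * c) + ∑ v ∈ S ∪ Y, B y v * (c * σ v) +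
          (∑ v ∈ S ∪ Y, B v y * (σ v * c) +
            ∑ u ∈ S ∪ Y, ∑ v ∈ S ∪ Y, B u v * (σ u * σ v)) := by
        rw [union_insert, sum_insert hyT, sum_insert hyT, ← sum_add_distrib,
          Function.update_self]
        congr 1
        · congr 1
          exact sum_congr rfl fun v hv => by rw [hne v hv]
        · refine sum_congr rfl fun u hu => ?_
          rw [sum_insert hyT, hne u hu, Function.update_self]
          congr 1
          exact sum_congr rfl fun v hv => by rw [hne v hv]
      rw [hexp, sum_insert hy, hc2]
      linarith

section Digraph

variable {V : Type} [Fintype V] (A : V → V → Prop) [DecidableRel A]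

lemma outDeg_eq_sum (R : Type) [Semiring R] (x : V) :
    (outDeg A x : R) = ∑ v, if A x v then (1 : R) else 0 := by
  rw [outDeg, card_filter]
  push_cast
  rfl

lemma inDeg_eq_sum (R : Type) [Semiring R] (x : V) :
    (inDeg A x : R) = ∑ v, if A v x then (1 : R) else 0 := by
  rw [inDeg, card_filter]
  push_cast
  rfl

lemma sVal_eq_abs (x : V) : sVal A x = |(outDeg A x : ℤ) - inDeg A x| := by
  rw [sVal, abs_eq_max_neg, neg_sub]

variable [DecidableEq V]

lemma dArcs_eq_sum (R : Type) [Semiring R] (S T : Finset V) :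
    (dArcs A S T : R) = ∑ u ∈ S, ∑ v ∈ T, if A u v then (1 : R) else 0 := by
  rw [dArcs, card_filter, sum_product]
  push_cast
  rfl

lemma sum_outDeg (R : Type) [Semiring R] :
    ∑ x, (outDeg A x : R) = dArcs A univ univ := by
  simp_rw [dArcs_eq_sum, outDeg_eq_sum]

lemma sum_inDeg (R : Type) [Semiring R] :
    ∑ x, (inDeg A x : R) = dArcs A univ univ := by
  simp_rw [dArcs_eq_sum, inDeg_eq_sum]
  exact sum_comm

lemma not_arc_of_dArcs_eq_zero {S T : Finset V} (h : dArcs A S T = 0) {u v : V} (hu : u ∈ S)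
    (hv : v ∈ T) : ¬ A u v := by
  rw [dArcs, card_eq_zero, filter_eq_empty_iff] at h
  exact h (x := (u, v)) (mem_product.2 ⟨hu, hv⟩)

lemma gap_eq_sum {X Y : Finset V} (hXY : X ∪ Y = univ) (hdXY : Disjoint X Y)
    (heX : dArcs A X X = 0) {X₁ : Finset V} (hX₁ : X₁ ⊆ X) :
    gap A X₁ (X \ X₁) Y = ∑ x ∈ X₁, ((outDeg A x : ℤ) - inDeg A x) -
      ∑ x ∈ X \ X₁, ((outDeg A x : ℤ) - inDeg A x) := by
  have hout : ∀ x ∈ X, (outDeg A x : ℤ) = ∑ y ∈ Y, if A x y then 1 else 0 := fun x hx => by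
    rw [outDeg_eq_sum, ← hXY, sum_union hdXY, sum_eq_zero, zero_add]
    exact fun v hv => if_neg (not_arc_of_dArcs_eq_zero A heX hx hv)
  have hin : ∀ x ∈ X, (inDeg A x : ℤ) = ∑ y ∈ Y, if A y x then 1 else 0 := fun x hx => by
    rw [inDeg_eq_sum, ← hXY, sum_union hdXY, sum_eq_zero, zero_add]
    exact fun v hv => if_neg (not_arc_of_dArcs_eq_zero A heX hv hx)
  have key : ∀ Z ⊆ X, ∑ x ∈ Z, ((outDeg A x : ℤ) - inDeg A x) = dArcs A Z Y - dArcs A Y Z := by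
    intro Z hZ
    rw [sum_sub_distrib, dArcs_eq_sum, dArcs_eq_sum, sum_comm (s := Y)]
    congr 1
    · exact sum_congr rfl fun x hx => hout x (hZ hx)
    · exact sum_congr rfl fun x hx => hin x (hZ hx)
  rw [key X₁ hX₁, key _ sdiff_subset, gap]
  ring

lemma sVal_le_card {X Y : Finset V} (hXY : X ∪ Y = univ) (heX : dArcs A X X = 0) {x : V}
    (hx : x ∈ X) : sVal A x ≤ #Y := by
  have hY : ∀ v, v ∉ X → v ∈ Y := fun v hv =>
    (mem_union.1 (hXY ▸ mem_univ v)).resolve_left hv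
  have hout : outDeg A x ≤ #Y := card_le_card fun v hv => hY v fun hvX =>
    not_arc_of_dArcs_eq_zero A heX hx hvX (mem_filter.1 hv).2
  have hin : inDeg A x ≤ #Y := card_le_card fun v hv => hY v fun hvX =>
    not_arc_of_dArcs_eq_zero A heX hvX hx (mem_filter.1 hv).2
  rw [sVal]
  omega

/-- If evenly many vertices of `X` have `s`-value at least the minimum gap, then the minimum gap
is at most `m / (2d)`. -/
lemma two_mul_minGap_le {X Y : Finset V} {d : ℕ} (hout : ∀ x, d ≤ outDeg A x)
    (hXY : X ∪ Y = univ) (hdXY : Disjoint X Y) (heX : dArcs A X X = 0) {θ : ℤ}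
    (hθ : ∀ X₁ ⊆ X, θ ≤ |gap A X₁ (X \ X₁) Y|) (heven : Even #{x ∈ X | θ ≤ sVal A x}) :
    2 * d * θ ≤ dArcs A univ univ := by
  rcases le_or_gt θ 0 with hneg | hpos
  · have : 2 * d * θ ≤ 0 := mul_nonpos_of_nonneg_of_nonpos (by positivity) hneg
    exact this.trans (by positivity)
  obtain ⟨x, hxX, hx⟩ : ∃ x ∈ X, 2 * θ ≤ sVal A x := by
    by_contra! hcon
    simp_rw [sVal_eq_abs] at hcon heven
    obtain ⟨t, ⟨X₁, hX₁, rfl⟩, ht⟩ := exists_isSignedSum_abs_lt hpos _ X hcon heven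
    rw [← gap_eq_sum A hXY hdXY heX hX₁] at ht
    exact (hθ X₁ hX₁).not_gt ht
  have hsum : (d : ℤ) * #Y ≤ dArcs A univ univ := by
    rw [← sum_outDeg A ℤ]
    calc (d : ℤ) * #Y = ∑ y ∈ Y, (d : ℤ) := by simp [mul_comm]
      _ ≤ ∑ y ∈ Y, (outDeg A y : ℤ) := sum_le_sum fun y _ => by exact_mod_cast hout y
      _ ≤ _ := sum_le_sum_of_subset_of_nonneg (subset_univ Y) fun _ _ _ => by positivity
  have hle := hx.trans (sVal_le_card A hXY heX hxX)
  have : (d : ℤ) * (2 * θ) ≤ d * #Y := mul_le_mul_of_nonneg_left hle (by positivity)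
  linarith

/-- The size of a directed cut in terms of the signs of the vertices. -/
lemma four_mul_dArcs_sign {σ : V → ℝ} (hσ : ∀ v, σ v = 1 ∨ σ v = -1) (c : ℝ)
    (hc : c = 1 ∨ c = -1) :
    4 * (dArcs A {v | σ v = c} {v | σ v = -c} : ℝ) = dArcs A univ univ +
      c * ∑ v, ((outDeg A v : ℝ) - inDeg A v) * σ v -
      ∑ u, ∑ v, (if A u v then 1 else 0) * (σ u * σ v) := by
  have hin : ∑ v, (inDeg A v : ℝ) * σ v = ∑ u, ∑ v, (if A u v then 1 else 0) * σ v := by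
    rw [sum_comm]
    exact sum_congr rfl fun v _ => by rw [inDeg_eq_sum, sum_mul]
  have hout : ∑ v, (outDeg A v : ℝ) * σ v = ∑ u, ∑ v, (if A u v then 1 else 0) * σ u :=
    sum_congr rfl fun v _ => by rw [outDeg_eq_sum, sum_mul]
  have hcut : (dArcs A {v | σ v = c} {v | σ v = -c} : ℝ) = ∑ u, ∑ v,
      if σ u = c then if σ v = -c then if A u v then (1 : ℝ) else 0 else 0 else 0 := by
    rw [dArcs_eq_sum, sum_filter]
    refine sum_congr rfl fun u _ => ?_
    split_ifs
    · rw [sum_filter]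
    · simp
  simp_rw [sub_mul]
  rw [sum_sub_distrib, hin, hout, hcut, dArcs_eq_sum]
  simp_rw [mul_sub, mul_sum, ← sum_sub_distrib, ← sum_add_distrib, ← sum_sub_distrib]
  refine sum_congr rfl fun u _ => sum_congr rfl fun v _ => ?_
  rcases hσ u with hu | hu <;> rcases hσ v with hv | hv <;> rcases hc with rfl | rfl <;>
    rw [hu, hv] <;> split_ifs <;> norm_num at *

/-- If all vertices of `Y` have small degree, then any gap of a partition of `X` can be turned
into a bipartition of the digraph whose two cuts have sizes about `(m ± gap) / 4`. -/
lemma exists_bipartition_of_gap (hirr : ∀ v, ¬ A v v) {m : ℕ} (hm : m = dArcs A univ univ)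
    {X Y : Finset V} (hXY : X ∪ Y = univ) (hdXY : Disjoint X Y) (heX : dArcs A X X = 0)
    {ε : ℝ} (hε : 0 < ε) (hdeg : ∀ y ∈ Y, (deg A y : ℝ) ≤ ε ^ 2 * m / 4)
    {X₁ : Finset V} (hX₁ : X₁ ⊆ X) :
    ∃ V₁ V₂ : Finset V, V₁ ∪ V₂ = univ ∧ Disjoint V₁ V₂ ∧
      (m - |(gap A X₁ (X \ X₁) Y : ℝ)|) / 4 - ε * m ≤
        min (dArcs A V₁ V₂ : ℝ) (dArcs A V₂ V₁ : ℝ) := by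
  rcases Nat.eq_zero_or_pos m with rfl | hmpos
  · refine ⟨univ, ∅, by simp, by simp, ?_⟩
    have := abs_nonneg (gap A X₁ (X \ X₁) Y : ℝ)
    refine le_trans ?_ (show (0 : ℝ) ≤ _ by positivity)
    norm_num
    linarith
  set K : ℝ := ε * m with hK
  have hm' : (0 : ℝ) < m := by exact_mod_cast hmpos
  have hKpos : 0 < K := by positivity
  set s : V → ℝ := fun v => (outDeg A v : ℝ) - inDeg A v with hs
  set w : V → ℝ := fun v => if v ∈ Y then s v else 0 with hw
  set σ₀ : V → ℝ := fun v => if v ∈ X₁ then 1 else -1 with hσ₀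
  obtain ⟨σ, hσ, hσX, hquad⟩ := exists_sign_quadratic_le
    (fun u v => 2 * (if A u v then 1 else 0) + w u * w v / K) X Y hdXY σ₀
    (fun v => by by_cases h : v ∈ X₁ <;> simp [hσ₀, h])
  have hwX : ∀ v ∈ X, w v = 0 := fun v hv => if_neg (disjoint_left.1 hdXY hv)
  have hX0 : ∑ u ∈ X, ∑ v ∈ X,
      (2 * (if A u v then 1 else 0) + w u * w v / K) * (σ₀ u * σ₀ v) = 0 :=
    sum_eq_zero fun u hu => sum_eq_zero fun v hv => by
      rw [if_neg (not_arc_of_dArcs_eq_zero A heX hu hv), hwX u hu]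
      ring
  have htrace : ∑ y ∈ Y, (2 * (if A y y then 1 else 0) + w y * w y / K) ≤ K / 2 := by
    have hterm : ∀ y ∈ Y, 2 * (if A y y then 1 else 0) + w y * w y / K ≤
        ε ^ 2 * m / 4 / K * deg A y := by
      intro y hy
      have hs2 : s y * s y ≤ deg A y * deg A y := by
        have h₁ : (0 : ℝ) ≤ outDeg A y := by positivity
        have h₂ : (0 : ℝ) ≤ inDeg A y := by positivity
        simp only [hs, deg]
        push_cast
        nlinarith [mul_nonneg h₁ h₂]
      have hd2 : (deg A y : ℝ) * deg A y ≤ ε ^ 2 * m / 4 * deg A y :=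
        mul_le_mul_of_nonneg_right (hdeg y hy) (by positivity)
      rw [if_neg (hirr y), mul_zero, zero_add, div_mul_eq_mul_div]
      simp only [hw, if_pos hy]
      exact div_le_div_of_nonneg_right (hs2.trans hd2) hKpos.le
    have hsum : ∑ y ∈ Y, (deg A y : ℝ) ≤ 2 * m := by
      calc ∑ y ∈ Y, (deg A y : ℝ) ≤ ∑ y, (deg A y : ℝ) :=
            sum_le_sum_of_subset_of_nonneg (subset_univ Y) fun _ _ _ => by positivity
        _ = 2 * m := by
            simp_rw [deg, Nat.cast_add]
            rw [sum_add_distrib, sum_outDeg, sum_inDeg, hm]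
            ring
    calc _ ≤ ∑ y ∈ Y, ε ^ 2 * m / 4 / K * deg A y := sum_le_sum hterm
      _ = ε ^ 2 * m / 4 / K * ∑ y ∈ Y, (deg A y : ℝ) := by rw [mul_sum]
      _ ≤ ε ^ 2 * m / 4 / K * (2 * m) := mul_le_mul_of_nonneg_left hsum (by positivity)
      _ = K / 2 := by
        rw [hK]
        field_simp
        ring
  set Q : ℝ := ∑ u, ∑ v, (if A u v then 1 else 0) * (σ u * σ v) with hQ
  set ξ : ℝ := ∑ y ∈ Y, s y * σ y with hξ
  have hξ' : ∑ v, w v * σ v = ξ := by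
    simp only [hw, ite_mul, zero_mul]
    rw [sum_ite_mem, univ_inter]
  have hform : ∑ u, ∑ v, (2 * (if A u v then 1 else 0) + w u * w v / K) * (σ u * σ v) =
      2 * Q + ξ * ξ / K := by
    rw [← hξ', sum_mul_sum, sum_div, hQ, mul_sum, ← sum_add_distrib]
    refine sum_congr rfl fun u _ => ?_
    rw [sum_div, mul_sum, ← sum_add_distrib]
    exact sum_congr rfl fun v _ => by ring
  rw [hXY, hform, hX0, zero_add] at hquad
  have hξabs : 2 * |ξ| ≤ ξ * ξ / K + K := by
    rw [div_add' _ _ _ hKpos.ne', le_div_iff₀ hKpos, ← abs_mul_abs_self ξ]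
    nlinarith [sq_nonneg (|ξ| - K)]
  have hL : ∑ v, s v * σ v = gap A X₁ (X \ X₁) Y + ξ := by
    rw [← hXY, sum_union hdXY, gap_eq_sum A hXY hdXY heX hX₁, ← sum_sdiff hX₁]
    have h₁ : ∑ x ∈ X₁, s x * σ x = ∑ x ∈ X₁, s x :=
      sum_congr rfl fun x hx => by simp [hσX x (hX₁ hx), hσ₀, hx]
    have h₂ : ∑ x ∈ X \ X₁, s x * σ x = - ∑ x ∈ X \ X₁, s x := by
      rw [← sum_neg_distrib]
      refine sum_congr rfl fun x hx => ?_
      rw [mem_sdiff] at hx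
      simp [hσX x hx.1, hσ₀, hx.2]
    rw [h₁, h₂]
    push_cast
    ring
  have hcut₁ := four_mul_dArcs_sign A hσ 1 (Or.inl rfl)
  have hcut₂ := four_mul_dArcs_sign A hσ (-1) (Or.inr rfl)
  rw [neg_neg] at hcut₂
  refine ⟨({v | σ v = 1} : Finset V), ({v | σ v = -1} : Finset V), ?_, ?_, ?_⟩
  · ext v
    simpa using hσ v
  · rw [disjoint_filter]
    intro v _ h₁ h₂
    linarith
  · change _ = _ + 1 * ∑ v, s v * σ v - Q at hcut₁
    change _ = _ + -1 * ∑ v, s v * σ v - Q at hcut₂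
    rw [hL, ← hm] at hcut₁ hcut₂
    have := neg_abs_le (gap A X₁ (X \ X₁) Y : ℝ)
    have := le_abs_self (gap A X₁ (X \ X₁) Y : ℝ)
    have := neg_abs_le ξ
    have := le_abs_self ξ
    exact le_min (by linarith) (by linarith)

end Digraph

/-- Lemma 3.1(2). -/
theorem stmt6 {V : Type} [Fintype V] [DecidableEq V] (A : V → V → Prop) [DecidableRel A]
    (hirr : ∀ v, ¬ A v v)
    (m : ℕ) (hm : m = dArcs A Finset.univ Finset.univ)
    (d : ℕ) (hd : 4 ≤ d) (hout : ∀ x, d ≤ outDeg A x)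
    (X Y : Finset V) (hXY : X ∪ Y = Finset.univ) (hdXY : Disjoint X Y)
    (heX : dArcs A X X = 0)
    (θ : ℤ) (hθ : IsLeast {t : ℤ | ∃ X₁ ⊆ X, t = |gap A X₁ (X \ X₁) Y|} θ)
    (X' : Finset V) (hX' : X' = X.filter fun x => θ ≤ sVal A x)
    (ε : ℝ) (hε : 0 < ε) (hdeg : ∀ y ∈ Y, (deg A y : ℝ) ≤ ε ^ 2 * m / 4)
    :
    (∃ V₁ V₂ : Finset V, V₁ ∪ V₂ = Finset.univ ∧ Disjoint V₁ V₂ ∧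
        (((d : ℝ) - 1) / (2 * (2 * (d : ℝ) - 1)) - ε) * m ≤
          min (dArcs A V₁ V₂ : ℝ) (dArcs A V₂ V₁ : ℝ)) ∨
      Odd X'.card := by
  rw [← Nat.not_even_iff_odd, or_iff_not_imp_right, not_not]
  intro heven
  subst hX'
  have hgap := two_mul_minGap_le A hout hXY hdXY heX (fun X₁ hX₁ => hθ.2 ⟨X₁, hX₁, rfl⟩) heven
  rw [← hm] at hgap
  obtain ⟨X₁, hX₁, hθX₁⟩ := hθ.1
  obtain ⟨V₁, V₂, hunion, hdisj, hcut⟩ :=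
    exists_bipartition_of_gap A hirr hm hXY hdXY heX hε hdeg hX₁
  refine ⟨V₁, V₂, hunion, hdisj, le_trans ?_ hcut⟩
  rw [← Int.cast_abs, ← hθX₁]
  have hθ0 : (0 : ℝ) ≤ θ := by
    rw [hθX₁]
    exact_mod_cast abs_nonneg _
  have hgap' : 2 * (d : ℝ) * θ ≤ m := by exact_mod_cast hgap
  have hd' : (4 : ℝ) ≤ d := by exact_mod_cast hd
  have hpos : (0 : ℝ) < 2 * d - 1 := by linarith
  have hθle : (θ : ℝ) ≤ m / (2 * d - 1) := by
    rw [le_div_iff₀ hpos]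
    linarith
  have hcoef : ((d : ℝ) - 1) / (2 * (2 * d - 1)) * m = (m - m / (2 * d - 1)) / 4 := by
    obtain ⟨k, hk⟩ : ∃ k : ℝ, k = 2 * d - 1 := ⟨_, rfl⟩
    rw [← hk] at hpos ⊢
    rw [show (d : ℝ) - 1 = (k - 1) / 2 by linarith]
    field_simp
    ring
  rw [sub_mul, hcoef]
  linarith
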